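/- Let a, b ∈ ℝ with a > 0, let ω = [[0, a], [-a, 0]], B = [[0, b], [-b, 0]], and let φ be the permutation matrix on ℝ⁴ swapping coordinates 2 and 4. Then φ⁻¹ ∘ (exp(-B) ∘ 𝒥_ω ∘ exp(B)) ∘ φ = [[-J', 0], [0, J'ᵀ]], where J' = [[b/a, -1/a], [a + b²/a, -b/a]]. -/

import Mathlib

open Matrix

/-!
In dimension two every alternating form is a multiple of `ε = !![0, 1; -1, 0]`, and `ε * ε = -1`.
Hence the B-transform of `𝒥_ω`, for `ω = a ε` and `B = b ε`, has scalar diagonal blocks `∓ b / a`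
and off-diagonal blocks proportional to `ε`. A matrix of this shape preserves the span of the first
coordinate of `V` and the second coordinate of `V*`, and the span of the other two coordinates.
T-duality in the second direction turns these two spans into `V` and `V*`, so the result is
block diagonal.
-/

namespace GeneralizedComplex

section Blocks

variable {n R : Type*} [Fintype n] [DecidableEq n] [CommRing R]

/-- The generalized complex structure `𝒥_ω` on `V ⊕ V*` induced by a symplectic form on `V` with
matrix `ω`, meaningful for invertible `ω` only. The summands `inl` and `inr` of the index type stand
for `V` and `V*`. -/
noncomputable def ofSymplectic (ω : Matrix n n R) : Matrix (n ⊕ n) (n ⊕ n) R :=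
  fromBlocks 0 (-ω⁻¹) ω 0

/-- The generalized complex structure on `V ⊕ V*` induced by a complex structure `J` on `V`, with
the sign convention in which `V` carries `-J`. -/
def ofComplex {n R : Type*} [Zero R] [Neg R] (J : Matrix n n R) : Matrix (n ⊕ n) (n ⊕ n) R :=
  fromBlocks (-J) 0 0 Jᵀ

/-- The B-field transform `exp B` of `V ⊕ V*`. As an endomorphism of `V ⊕ V*`, `B` maps `V` to `V*`
and squares to zero, so its exponential is `1 + B`. -/
def bFieldTransform {n R : Type*} [DecidableEq n] [Zero R] [One R] (B : Matrix n n R) :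
    Matrix (n ⊕ n) (n ⊕ n) R :=
  fromBlocks 1 0 B 1

/-- T-duality in the direction `i`, as a permutation of the coordinates of `V ⊕ V*`: it exchanges
the `i`-th coordinate of `V` with the dual coordinate of `V*`. -/
def tDuality {n : Type*} [DecidableEq n] (i : n) : Equiv.Perm (n ⊕ n) :=
  Equiv.swap (.inl i) (.inr i)

theorem bFieldTransform_neg_mul_ofSymplectic_mul (ω B : Matrix n n R) :
    bFieldTransform (-B) * ofSymplectic ω * bFieldTransform B =
      fromBlocks (-(ω⁻¹ * B)) (-ω⁻¹) (ω + B * ω⁻¹ * B) (B * ω⁻¹) := by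
  simp [bFieldTransform, ofSymplectic, fromBlocks_multiply]

theorem inv_permMatrix (σ : Equiv.Perm n) : (σ.permMatrix R)⁻¹ = σ⁻¹.permMatrix R :=
  inv_eq_right_inv <| by rw [← permMatrix_mul, inv_mul_cancel, permMatrix_one]

theorem inv_permMatrix_mul_mul_permMatrix (σ : Equiv.Perm n) (A : Matrix n n R) :
    (σ.permMatrix R)⁻¹ * A * σ.permMatrix R = A.submatrix σ.symm σ.symm := by
  rw [inv_permMatrix, PEquiv.toMatrix_toPEquiv_mul, PEquiv.mul_toMatrix_toPEquiv,
    submatrix_submatrix]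
  rfl

theorem reindex_inv_mul_mul_mul_mul {m : Type*} [Fintype m] [DecidableEq m] (e : n ≃ m)
    (P X Y Z : Matrix n n R) :
    reindex e e (P⁻¹ * (X * Y * Z) * P) =
      (reindex e e P)⁻¹ * (reindex e e X * reindex e e Y * reindex e e Z) * reindex e e P := by
  simp only [reindex_apply, inv_submatrix_equiv, submatrix_mul_equiv]

end Blocks

section Plane

/-- The matrix of the alternating form `x e¹ ∧ e²` on the plane. -/
def skew {R : Type*} [Zero R] [Neg R] (x : R) : Matrix (Fin 2) (Fin 2) R :=
  !![0, x; -x, 0]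

section Ring

variable {R : Type*} [Ring R]

theorem skew_add (x y : R) : skew (x + y) = skew x + skew y := by
  simp [skew, add_comm]

theorem neg_skew (x : R) : -skew x = skew (-x) := by
  simp [skew]

theorem skew_mul_skew (x y : R) : skew x * skew y = scalar (Fin 2) (-(x * y)) := by
  ext i j; fin_cases i <;> fin_cases j <;> simp [skew]

theorem scalar_mul_skew (c x : R) : scalar (Fin 2) c * skew x = skew (c * x) := by
  simp [skew, ← smul_eq_diagonal_mul]

theorem submatrix_tDuality_fromBlocks_scalar_skew (s t u : R) :
    (fromBlocks (scalar (Fin 2) (-t)) (skew u) (skew s) (scalar (Fin 2) t)).submatrix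
        (tDuality 1) (tDuality 1) = ofComplex !![t, -u; s, -t] := by
  ext (i | i) (j | j) <;> fin_cases i <;> fin_cases j <;>
    simp [ofComplex, skew, tDuality, Equiv.swap_apply_def]

end Ring

section CommRing

variable {R : Type*} [CommRing R]

theorem inv_skew (a : Rˣ) : (skew (a : R))⁻¹ = skew (-↑a⁻¹) :=
  inv_eq_right_inv (by simp [skew_mul_skew])

theorem bFieldTransform_neg_mul_ofSymplectic_mul_skew (a : Rˣ) (b : R) :
    bFieldTransform (-skew b) * ofSymplectic (skew (a : R)) * bFieldTransform (skew b) =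
      fromBlocks (scalar (Fin 2) (-(b * ↑a⁻¹))) (skew ↑a⁻¹)
        (skew (a + b ^ 2 * ↑a⁻¹)) (scalar (Fin 2) (b * ↑a⁻¹)) := by
  have h_dual : skew b * skew (-↑a⁻¹ : R) = scalar (Fin 2) (b * ↑a⁻¹) := by
    rw [skew_mul_skew, mul_neg, neg_neg]
  have h_primal : -(skew (-↑a⁻¹ : R) * skew b) = scalar (Fin 2) (-(b * ↑a⁻¹)) := by
    rw [skew_mul_skew, ← map_neg, neg_mul, neg_neg, mul_comm]
  have h_lower : skew (a : R) + skew b * skew (-↑a⁻¹ : R) * skew b = skew (a + b ^ 2 * ↑a⁻¹) := by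
    rw [h_dual, scalar_mul_skew, ← skew_add, sq, mul_right_comm]
  rw [bFieldTransform_neg_mul_ofSymplectic_mul, inv_skew, h_primal, h_lower, h_dual, neg_skew,
    neg_neg]

end CommRing

theorem reindex_fromBlocks_fin_two {R : Type*} (A B C D : Matrix (Fin 2) (Fin 2) R) :
    reindex (finSumFinEquiv (m := 2) (n := 2)) finSumFinEquiv (fromBlocks A B C D) =
      !![A 0 0, A 0 1, B 0 0, B 0 1;
         A 1 0, A 1 1, B 1 0, B 1 1;
         C 0 0, C 0 1, D 0 0, D 0 1;
         C 1 0, C 1 1, D 1 0, D 1 1] := by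
  ext i j; fin_cases i <;> fin_cases j <;> rfl

theorem reindex_permMatrix_tDuality_one {R : Type*} [Zero R] [One R] :
    reindex (finSumFinEquiv (m := 2) (n := 2)) finSumFinEquiv
        ((tDuality (1 : Fin 2)).permMatrix R) =
      !![1, 0, 0, 0; 0, 0, 0, 1; 0, 0, 1, 0; 0, 1, 0, 0] := by
  ext i j
  fin_cases i <;> fin_cases j <;>
    simp [tDuality, PEquiv.toMatrix_apply, Equiv.swap_apply_def, finSumFinEquiv, Fin.addCases]

end Plane

end GeneralizedComplex

open GeneralizedComplex

theorem stmt_8_general {R : Type*} [CommRing R] (a : Rˣ) (b : R) :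
    ((tDuality (1 : Fin 2)).permMatrix R)⁻¹ *
        (bFieldTransform (-skew b) * ofSymplectic (skew (a : R)) * bFieldTransform (skew b)) *
        (tDuality (1 : Fin 2)).permMatrix R =
      ofComplex !![b * ↑a⁻¹, -↑a⁻¹; a + b ^ 2 * ↑a⁻¹, -(b * ↑a⁻¹)] := by
  rw [bFieldTransform_neg_mul_ofSymplectic_mul_skew, inv_permMatrix_mul_mul_permMatrix]
  exact submatrix_tDuality_fromBlocks_scalar_skew ..

theorem stmt_8 (a b : ℝ) (ha : 0 < a) :
    let ω : Matrix (Fin 2) (Fin 2) ℝ := !![0, a; -a, 0]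
    let ωinv : Matrix (Fin 2) (Fin 2) ℝ := !![0, -1/a; 1/a, 0]
    let B : Matrix (Fin 2) (Fin 2) ℝ := !![0, b; -b, 0]
    let J' : Matrix (Fin 2) (Fin 2) ℝ := !![b/a, -1/a; a + b^2/a, -b/a]
    let 𝒥ω : Matrix (Fin 4) (Fin 4) ℝ :=
      !![0, 0, -ωinv 0 0, -ωinv 0 1;
         0, 0, -ωinv 1 0, -ωinv 1 1;
         ω 0 0, ω 0 1, 0, 0;
         ω 1 0, ω 1 1, 0, 0]
    let expB : Matrix (Fin 4) (Fin 4) ℝ :=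
      !![1, 0, 0, 0; 0, 1, 0, 0; B 0 0, B 0 1, 1, 0; B 1 0, B 1 1, 0, 1]
    let expmB : Matrix (Fin 4) (Fin 4) ℝ :=
      !![1, 0, 0, 0; 0, 1, 0, 0; -B 0 0, -B 0 1, 1, 0; -B 1 0, -B 1 1, 0, 1]
    let φ : Matrix (Fin 4) (Fin 4) ℝ := !![1,0,0,0; 0,0,0,1; 0,0,1,0; 0,1,0,0]
    φ⁻¹ * (expmB * 𝒥ω * expB) * φ =
      !![-J' 0 0, -J' 0 1, 0, 0;
         -J' 1 0, -J' 1 1, 0, 0;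
         0, 0, J'ᵀ 0 0, J'ᵀ 0 1;
         0, 0, J'ᵀ 1 0, J'ᵀ 1 1] := by
  have h := congrArg (reindex (finSumFinEquiv (m := 2) (n := 2)) finSumFinEquiv)
    (stmt_8_general (Units.mk0 a ha.ne') b)
  simp only [reindex_inv_mul_mul_mul_mul, reindex_permMatrix_tDuality_one, bFieldTransform,
    ofSymplectic, ofComplex, inv_skew, reindex_fromBlocks_fin_two] at h
  -- Removing `cons_mul` keeps the products unexpanded, so that both sides are compared factorwise.
  simpa [skew, div_eq_mul_inv, -cons_mul] using h
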